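/- Let ϑ, ϑ₁, ϑ₂ be Beurling weights on ℝ^d and 1 ≤ p, q, r < ∞. Then A^{p,1,q,r}_{ϑ₁,ϑ}(ℝ^d) is continuously embedded in A^{p,1,q,r}_{ϑ₂,ϑ}(ℝ^d) (i.e. A^{p,1,q,r}_{ϑ₁,ϑ}(ℝ^d) ⊆ A^{p,1,q,r}_{ϑ₂,ϑ}(ℝ^d) and there exists C > 0 with ‖f‖_{A_{ϑ₂,ϑ}} ≤ C·‖f‖_{A_{ϑ₁,ϑ}} for all f ∈ A^{p,1,q,r}_{ϑ₁,ϑ}(ℝ^d)) if and only if ϑ₂ ≺ ϑ₁. -/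

import Mathlib

open MeasureTheory Filter Topology
open scoped ENNReal NNReal BigOperators

noncomputable section

/-- The unit cube `α + [0,1)^d` at the integer point `α ∈ ℤ^d`. -/
def cube {d : ℕ} (α : Fin d → ℤ) : Set (Fin d → ℝ) :=
  Set.univ.pi fun i => Set.Ico (α i : ℝ) ((α i : ℝ) + 1)

/-- The weighted amalgam norm `‖f‖_{pq,ω}` of the space `(L^p_ω, ℓ^q)`. -/
def amalgamNorm {d : ℕ} (p q : ℝ) (ω : (Fin d → ℝ) → ℝ) (f : (Fin d → ℝ) → ℂ) : ℝ≥0∞ :=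
  (∑' α : Fin d → ℤ,
      (eLpNorm (fun x => ω x • f x) (ENNReal.ofReal p) (volume.restrict (cube α))) ^ q) ^ (1 / q)

/-- Membership in the weighted amalgam space `(L^p_ω, ℓ^q)`. -/
def MemAmalgam {d : ℕ} (p q : ℝ) (ω : (Fin d → ℝ) → ℝ) (f : (Fin d → ℝ) → ℂ) : Prop :=
  Measurable f ∧ amalgamNorm p q ω f < ⊤

/-- A Beurling weight: measurable, `ϑ ≥ 1` and submultiplicative. -/
def IsBeurling {d : ℕ} (ϑ : (Fin d → ℝ) → ℝ) : Prop :=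
  Measurable ϑ ∧ (∀ x, 1 ≤ ϑ x) ∧ ∀ x y, ϑ (x + y) ≤ ϑ x * ϑ y

/-- The Fourier transform `f̂(ξ) = ∫ f(x) e^{-2πi⟨x,ξ⟩} dx`. -/
def fourierT {d : ℕ} (f : (Fin d → ℝ) → ℂ) (ξ : Fin d → ℝ) : ℂ :=
  ∫ x : Fin d → ℝ,
    Complex.exp (-(2 * (Real.pi : ℂ) * Complex.I * ∑ i, (x i : ℂ) * (ξ i : ℂ))) * f x

/-- The norm of `A^{p,1,q,r}_{ϑ₁,ϑ₂}(ℝ^d)`. -/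
def ANorm {d : ℕ} (p q r : ℝ) (ϑ₁ ϑ₂ : (Fin d → ℝ) → ℝ) (f : (Fin d → ℝ) → ℂ) : ℝ≥0∞ :=
  amalgamNorm p 1 ϑ₁ f + amalgamNorm q r ϑ₂ (fourierT f)

/-- Membership in `A^{p,1,q,r}_{ϑ₁,ϑ₂}(ℝ^d)`. -/
def MemA {d : ℕ} (p q r : ℝ) (ϑ₁ ϑ₂ : (Fin d → ℝ) → ℝ) (f : (Fin d → ℝ) → ℂ) : Prop :=
  MemAmalgam p 1 ϑ₁ f ∧ MemAmalgam q r ϑ₂ (fourierT f)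

/-- Convolution `(f∗g)(x) = ∫ f(x−t)g(t) dt`. -/
def convF {d : ℕ} (f g : (Fin d → ℝ) → ℂ) (x : Fin d → ℝ) : ℂ :=
  ∫ t : Fin d → ℝ, f (x - t) * g t

/-- `ϑ ≺ ϑ'` : domination of weights up to a constant. -/
def Prec {d : ℕ} (ϑ ϑ' : (Fin d → ℝ) → ℝ) : Prop :=
  ∃ C : ℝ, 0 < C ∧ ∀ x, ϑ x ≤ C * ϑ' x

/-- The Beurling–Domar condition `∑_{n≥1} log ϑ(nx)/n² < ∞`. -/
def BeurlingDomar {d : ℕ} (ϑ : (Fin d → ℝ) → ℝ) : Prop :=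
  ∀ x : Fin d → ℝ, Summable fun n : ℕ => Real.log (ϑ ((n : ℝ) • x)) / (n : ℝ) ^ 2

/-- `w` does not tend to zero as `|x| → ∞`. -/
def NotVanishingAtInfty {d : ℕ} (w : (Fin d → ℝ) → ℝ) : Prop :=
  ∃ δ : ℝ, 0 < δ ∧ ∀ R : ℝ, 0 < R → ∃ x : Fin d → ℝ, R < ‖x‖ ∧ δ ≤ w x

end

/-!
If `ϑ₂ ≤ C ϑ₁`, the two norms compare term by term. For the converse, test the embedding on the
translates of the Gaussian `g(x) = e^{-π|x|²}`. Translation multiplies `ĝ = g` by a phase, so the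
Fourier part of the norm of `g(· - t)` does not depend on `t`. A measurable submultiplicative weight
is bounded near `0` by the Steinhaus theorem, hence grows at most exponentially, hence changes by at
most a constant factor over bounded distances; as the Gaussian beats any exponential, the
`(L^p_w, ℓ¹)` norm of `g(· - t)` is comparable to `w(t)`. The embedding therefore yields
`ϑ₂(t) ≲ ϑ₁(t) + 1 ≲ ϑ₁(t)`.
-/

/-! ### Growth of submultiplicative functions -/

section Submultiplicative

lemma apply_succ_nsmul_le_pow {G : Type*} [AddMonoid G] {w : G → ℝ} (hw₀ : ∀ x, 0 ≤ w x)
    (hw_mul : ∀ x y, w (x + y) ≤ w x * w y) (k : ℕ) (x : G) :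
    w ((k + 1) • x) ≤ w x ^ (k + 1) := by
  induction k with
  | zero => simp
  | succ k ih =>
    rw [succ_nsmul, pow_succ]
    exact (hw_mul _ _).trans (mul_le_mul_of_nonneg_right ih (hw₀ x))

variable {E : Type*} [NormedAddCommGroup E] [NormedSpace ℝ E] {w : E → ℝ}

lemma exists_bound_near_zero_of_submultiplicative [FiniteDimensional ℝ E] [MeasurableSpace E]
    [BorelSpace E] (hw : Measurable w) (hw₀ : ∀ x, 0 ≤ w x)
    (hw_mul : ∀ x y, w (x + y) ≤ w x * w y) :
    ∃ δ > 0, ∃ B ≥ 1, ∀ x, ‖x‖ < δ → w x ≤ B := by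
  let μ : Measure E := Measure.addHaar
  let S (n : ℕ) : Set E := {x | w x ≤ n ∧ w (-x) ≤ n}
  have iUnion_S : ⋃ n, S n = Set.univ := by
    refine Set.eq_univ_of_forall fun x => Set.mem_iUnion.2 ?_
    obtain ⟨n, hn⟩ := exists_nat_ge (max (w x) (w (-x)))
    exact ⟨n, max_le_iff.1 hn⟩
  obtain ⟨n, hn⟩ : ∃ n, 0 < μ (S n) :=
    exists_measure_pos_of_not_measure_iUnion_null (by simp [iUnion_S, NeZero.ne μ])
  have measurableSet_S : MeasurableSet (S n) :=
    (measurableSet_le hw measurable_const).inter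
      (measurableSet_le (hw.comp measurable_neg) measurable_const)
  -- Steinhaus: the difference set of a set of positive measure is a neighbourhood of `0`.
  obtain ⟨δ, hδ, hball⟩ := Metric.mem_nhds_iff.1
    (Measure.sub_mem_nhds_zero_of_addHaar_pos μ (S n) measurableSet_S hn)
  refine ⟨δ, hδ, max (n * n) 1, le_max_right _ _, fun x hx => le_max_of_le_left ?_⟩
  obtain ⟨a, ha, b, hb, rfl⟩ := hball (mem_ball_zero_iff.2 hx)
  calc w (a - b) ≤ w a * w (-b) := by rw [sub_eq_add_neg]; exact hw_mul a (-b)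
    _ ≤ n * n := mul_le_mul ha.1 hb.2 (hw₀ _) n.cast_nonneg

lemma le_mul_exp_of_bound_near_zero (hw₀ : ∀ x, 0 ≤ w x)
    (hw_mul : ∀ x y, w (x + y) ≤ w x * w y) {δ B : ℝ} (hδ : 0 < δ) (hB : 1 ≤ B)
    (hwB : ∀ x, ‖x‖ < δ → w x ≤ B) (x : E) :
    w x ≤ B * Real.exp (Real.log B / δ * ‖x‖) := by
  have hB₀ : 0 < B := one_pos.trans_le hB
  set k := ⌊‖x‖ / δ⌋₊
  set y : E := ((k + 1 : ℕ) : ℝ)⁻¹ • x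
  have hk₀ : (0 : ℝ) < (k + 1 : ℕ) := by positivity
  have hxy : (k + 1) • y = x := by
    rw [← Nat.cast_smul_eq_nsmul ℝ, smul_inv_smul₀ hk₀.ne']
  have hy : ‖y‖ < δ := by
    rw [norm_smul, norm_inv, Real.norm_natCast, inv_mul_lt_iff₀ hk₀, ← div_lt_iff₀ hδ]
    exact_mod_cast Nat.lt_floor_add_one (‖x‖ / δ)
  calc w x = w ((k + 1) • y) := by rw [hxy]
    _ ≤ w y ^ (k + 1) := apply_succ_nsmul_le_pow hw₀ hw_mul k y
    _ ≤ B ^ (k + 1) := pow_le_pow_left₀ (hw₀ y) (hwB y hy) _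
    _ = B * Real.exp (k * Real.log B) := by rw [pow_succ', Real.exp_nat_mul, Real.exp_log hB₀]
    _ ≤ B * Real.exp (‖x‖ / δ * Real.log B) := by
        gcongr
        · exact Real.log_nonneg hB
        · exact Nat.floor_le (by positivity)
    _ = B * Real.exp (Real.log B / δ * ‖x‖) := by ring_nf

end Submultiplicative

/-! ### Weights -/

/-- A weight (a measurable positive function) of at most exponential growth. This is all that is
needed for the weighted amalgam norms of a Gaussian to be finite. -/
structure HasExpGrowth {d : ℕ} (w : (Fin d → ℝ) → ℝ) : Prop where
  measurable : Measurable w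
  pos : ∀ x, 0 < w x
  exists_le_exp : ∃ M a : ℝ, 0 < M ∧ ∀ x, w x ≤ M * Real.exp (a * ‖x‖)

/-- A weight (a measurable positive function) that is moderate with respect to an exponential:
a shift of its argument by `y` costs at most a factor exponential in `‖y‖`. -/
structure IsModerateWeight {d : ℕ} (w : (Fin d → ℝ) → ℝ) : Prop where
  measurable : Measurable w
  pos : ∀ x, 0 < w x
  exists_add_le : ∃ M a : ℝ, 0 < M ∧ ∀ x y, w (x + y) ≤ w x * (M * Real.exp (a * ‖y‖))

namespace IsBeurling

variable {d : ℕ} {w : (Fin d → ℝ) → ℝ}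

lemma pos (hw : IsBeurling w) (x : Fin d → ℝ) : 0 < w x :=
  one_pos.trans_le (hw.2.1 x)

lemma hasExpGrowth (hw : IsBeurling w) : HasExpGrowth w where
  measurable := hw.1
  pos := hw.pos
  exists_le_exp := by
    have hw₀ : ∀ x, 0 ≤ w x := fun x => (hw.pos x).le
    obtain ⟨δ, hδ, B, hB, hwB⟩ := exists_bound_near_zero_of_submultiplicative hw.1 hw₀ hw.2.2
    exact ⟨B, Real.log B / δ, one_pos.trans_le hB,
      le_mul_exp_of_bound_near_zero hw₀ hw.2.2 hδ hB hwB⟩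

lemma isModerateWeight (hw : IsBeurling w) : IsModerateWeight w where
  measurable := hw.1
  pos := hw.pos
  exists_add_le := by
    obtain ⟨M, a, hM, hwM⟩ := hw.hasExpGrowth.exists_le_exp
    exact ⟨M, a, hM, fun x y =>
      (hw.2.2 x y).trans (mul_le_mul_of_nonneg_left (hwM y) (hw.pos x).le)⟩

end IsBeurling

lemma IsModerateWeight.exists_le_mul_of_norm_sub_le_one {d : ℕ} {w : (Fin d → ℝ) → ℝ}
    (hw : IsModerateWeight w) :
    ∃ B : ℝ≥0, ∀ x y, ‖x - y‖ ≤ 1 → w x ≤ B * w y := by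
  obtain ⟨M, a, hM, hwM⟩ := hw.exists_add_le
  refine ⟨⟨M * Real.exp |a|, by positivity⟩, fun x y hxy => ?_⟩
  have ha : a * ‖x - y‖ ≤ |a| :=
    calc a * ‖x - y‖ ≤ |a| * ‖x - y‖ := by gcongr; exact le_abs_self a
      _ ≤ |a| := mul_le_of_le_one_right (abs_nonneg a) hxy
  calc w x = w (y + (x - y)) := by rw [add_sub_cancel]
    _ ≤ w y * (M * Real.exp (a * ‖x - y‖)) := hwM y (x - y)
    _ ≤ w y * (M * Real.exp |a|) := by have := hw.pos y; gcongr
    _ = M * Real.exp |a| * w y := mul_comm _ _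

lemma prec_of_ofReal_le {d : ℕ} {w w' : (Fin d → ℝ) → ℝ} (hw' : ∀ x, 0 ≤ w' x) {D : ℝ≥0}
    (h : ∀ x, ENNReal.ofReal (w x) ≤ D * ENNReal.ofReal (w' x)) : Prec w w' := by
  refine ⟨D + 1, by positivity, fun x => ?_⟩
  have hx := h x
  rw [← ENNReal.ofReal_coe_nnreal, ← ENNReal.ofReal_mul D.coe_nonneg,
    ENNReal.ofReal_le_ofReal_iff (mul_nonneg D.coe_nonneg (hw' x))] at hx
  linarith [hw' x]

/-! ### Sums over the lattice -/

lemma tsum_fin_pi_prod {κ : Type*} {d : ℕ} (u : Fin d → κ → ℝ≥0∞) :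
    ∑' α : Fin d → κ, ∏ i, u i (α i) = ∏ i, ∑' n, u i n := by
  induction d with
  | zero => simp
  | succ d ih =>
    rw [← (Fin.consEquiv fun _ : Fin (d + 1) => κ).tsum_eq, ENNReal.tsum_prod', Fin.prod_univ_succ]
    simp only [Fin.consEquiv_apply, Fin.prod_univ_succ, Fin.cons_zero, Fin.cons_succ,
      ENNReal.tsum_mul_left, ENNReal.tsum_mul_right, ih]

lemma summable_exp_neg_mul_abs_int {q : ℝ} (hq : 0 < q) :
    Summable fun n : ℤ => Real.exp (-(q * |(n : ℝ)|)) := by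
  have summable_nat : Summable fun n : ℕ => Real.exp (n * -q) :=
    Real.summable_exp_nat_mul_iff.2 (neg_neg_of_pos hq)
  apply Summable.of_nat_of_neg <;> simpa [mul_comm] using summable_nat

lemma tsum_rpow_exp_neg_sum_abs_ne_top (d : ℕ) {q : ℝ} (hq : 0 < q) :
    ∑' α : Fin d → ℤ, ENNReal.ofReal (Real.exp (-∑ i, |(α i : ℝ)|)) ^ q ≠ ⊤ := by
  have factor (α : Fin d → ℤ) : ENNReal.ofReal (Real.exp (-∑ i, |(α i : ℝ)|)) ^ q =
      ∏ i, ENNReal.ofReal (Real.exp (-(q * |(α i : ℝ)|))) := by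
    rw [ENNReal.ofReal_rpow_of_pos (Real.exp_pos _), ← Real.exp_mul, neg_mul, mul_comm,
      Finset.mul_sum, ← Finset.sum_neg_distrib, Real.exp_sum,
      ENNReal.ofReal_prod_of_nonneg fun _ _ => (Real.exp_pos _).le]
  rw [tsum_congr factor,
    tsum_fin_pi_prod fun (_ : Fin d) (n : ℤ) => ENNReal.ofReal (Real.exp (-(q * |(n : ℝ)|)))]
  exact ENNReal.prod_ne_top fun _ _ => (summable_exp_neg_mul_abs_int hq).tsum_ofReal_ne_top

lemma tsum_rpow_rpow_le_mul {ι : Type*} {q : ℝ} (hq : 0 < q) {A B : ι → ℝ≥0∞} {c : ℝ≥0∞}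
    (h : ∀ α, A α ≤ c * B α) :
    (∑' α, A α ^ q) ^ (1 / q) ≤ c * (∑' α, B α ^ q) ^ (1 / q) :=
  calc (∑' α, A α ^ q) ^ (1 / q) ≤ (∑' α, (c * B α) ^ q) ^ (1 / q) := by
        gcongr with α
        exact h α
    _ = (c ^ q * ∑' α, B α ^ q) ^ (1 / q) := by
        simp only [ENNReal.mul_rpow_of_nonneg _ _ hq.le, ENNReal.tsum_mul_left]
    _ = c * (∑' α, B α ^ q) ^ (1 / q) := by
        rw [ENNReal.mul_rpow_of_nonneg _ _ (by positivity), one_div, ENNReal.rpow_rpow_inv hq.ne']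

/-! ### Amalgam norms -/

section Cube

variable {d : ℕ}

lemma measurableSet_cube (α : Fin d → ℤ) : MeasurableSet (cube α) :=
  MeasurableSet.univ_pi fun _ => measurableSet_Ico

lemma volume_cube (α : Fin d → ℤ) : volume (cube α) = 1 := by
  simp [cube, volume_pi_pi]

instance isProbabilityMeasure_restrict_cube (α : Fin d → ℤ) :
    IsProbabilityMeasure (volume.restrict (cube α)) :=
  ⟨by rw [Measure.restrict_apply_univ, volume_cube]⟩

lemma mem_cube_floor (t : Fin d → ℝ) : t ∈ cube fun i => ⌊t i⌋ :=
  fun i _ => ⟨Int.floor_le (t i), Int.lt_floor_add_one (t i)⟩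

lemma norm_sub_le_one_of_mem_cube {α : Fin d → ℤ} {x y : Fin d → ℝ} (hx : x ∈ cube α)
    (hy : y ∈ cube α) : ‖x - y‖ ≤ 1 := by
  refine (pi_norm_le_iff_of_nonneg zero_le_one).2 fun i => abs_le.2 ?_
  obtain ⟨hαx, hxα⟩ := hx i trivial
  obtain ⟨hαy, hyα⟩ := hy i trivial
  constructor <;> simp only [Pi.sub_apply] <;> linarith

lemma abs_sub_le_of_mem_cube {α β : Fin d → ℤ} {x y : Fin d → ℝ} (hx : x ∈ cube α)
    (hy : y ∈ cube β) (i : Fin d) : |(α i : ℝ) - β i| ≤ |x i - y i| + 1 := by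
  obtain ⟨hαx, hxα⟩ := hx i trivial
  obtain ⟨hβy, hyβ⟩ := hy i trivial
  rw [abs_le]
  constructor <;> linarith [neg_abs_le (x i - y i), le_abs_self (x i - y i)]

variable {F : Type*} [NormedAddCommGroup F] {α : Fin d → ℤ} {f : (Fin d → ℝ) → F} {b : ℝ}

lemma eLpNorm_restrict_cube_le (p : ℝ≥0∞) (hf : ∀ x ∈ cube α, ‖f x‖ ≤ b) :
    eLpNorm f p (volume.restrict (cube α)) ≤ ENNReal.ofReal b := by
  simpa using eLpNorm_le_of_ae_bound (p := p)
    (ae_restrict_of_forall_mem (μ := volume) (measurableSet_cube α) hf)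

lemma le_eLpNorm_restrict_cube {p : ℝ≥0∞} (hp : p ≠ 0) (hf : ∀ x ∈ cube α, b ≤ ‖f x‖) :
    ENNReal.ofReal b ≤ eLpNorm f p (volume.restrict (cube α)) :=
  calc ENNReal.ofReal b ≤ eLpNorm (fun _ => ENNReal.ofReal b) p (volume.restrict (cube α)) := by
        rw [eLpNorm_const _ hp (NeZero.ne _), measure_univ, ENNReal.one_rpow, mul_one,
          enorm_eq_self]
    _ ≤ eLpNorm f p (volume.restrict (cube α)) :=
        eLpNorm_mono_enorm_ae <| ae_restrict_of_forall_mem (measurableSet_cube α) fun x hx => by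
          rw [enorm_eq_self, ← ofReal_norm]
          exact ENNReal.ofReal_le_ofReal (hf x hx)

end Cube

section AmalgamNorm

variable {d : ℕ} {q : ℝ}

lemma eLpNorm_restrict_cube_le_amalgamNorm (p : ℝ) (hq : 0 < q) (w : (Fin d → ℝ) → ℝ)
    (f : (Fin d → ℝ) → ℂ) (α : Fin d → ℤ) :
    eLpNorm (fun x => w x • f x) (ENNReal.ofReal p) (volume.restrict (cube α)) ≤
      amalgamNorm p q w f := by
  rw [amalgamNorm, one_div, ENNReal.le_rpow_inv_iff hq]
  exact ENNReal.le_tsum α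

lemma amalgamNorm_le_mul_of_weight_le (p : ℝ) (hq : 0 < q) {w w' : (Fin d → ℝ) → ℝ} {C : ℝ}
    (h : ∀ x, |w x| ≤ C * |w' x|) (f : (Fin d → ℝ) → ℂ) :
    amalgamNorm p q w f ≤ ENNReal.ofReal C * amalgamNorm p q w' f := by
  refine tsum_rpow_rpow_le_mul hq fun α =>
    eLpNorm_le_mul_eLpNorm_of_ae_le_mul (ae_of_all _ fun x => ?_) _
  simp only [norm_smul, Real.norm_eq_abs, ← mul_assoc]
  exact mul_le_mul_of_nonneg_right (h x) (norm_nonneg _)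

lemma exists_amalgamNorm_le_of_exp_decay (d : ℕ) (hq : 0 < q) :
    ∃ N : ℝ≥0, ∀ (p : ℝ) (w : (Fin d → ℝ) → ℝ) (f : (Fin d → ℝ) → ℂ) (K : ℝ) (t : Fin d → ℝ),
      0 ≤ K → (∀ x, ‖w x • f x‖ ≤ K * Real.exp (-∑ i, |x i - t i|)) →
        amalgamNorm p q w f ≤ N * ENNReal.ofReal K := by
  let profile (α : Fin d → ℤ) : ℝ≥0∞ := ENNReal.ofReal (Real.exp (-∑ i, |(α i : ℝ)|))
  have sum_ne_top : (∑' α, profile α ^ q) ^ (1 / q) ≠ ⊤ :=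
    ENNReal.rpow_ne_top_of_nonneg (by positivity) (tsum_rpow_exp_neg_sum_abs_ne_top d hq)
  lift (∑' α, profile α ^ q) ^ (1 / q) to ℝ≥0 using sum_ne_top with S hS
  refine ⟨S * (Real.exp d).toNNReal, fun p w f K t hK hf => ?_⟩
  let β : Fin d → ℤ := fun i => ⌊t i⌋
  have on_cube (α : Fin d → ℤ) :
      eLpNorm (fun x => w x • f x) (ENNReal.ofReal p) (volume.restrict (cube α)) ≤
        ENNReal.ofReal (K * Real.exp d) * profile (α - β) := by
    rw [← ENNReal.ofReal_mul (by positivity), mul_assoc, ← Real.exp_add]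
    refine eLpNorm_restrict_cube_le _ fun x hx => (hf x).trans ?_
    gcongr
    have := Finset.sum_le_sum fun i (_ : i ∈ Finset.univ) =>
      abs_sub_le_of_mem_cube hx (mem_cube_floor t) i
    simp only [Finset.sum_add_distrib, Finset.sum_const, Finset.card_univ, Fintype.card_fin,
      nsmul_eq_mul, mul_one] at this
    simp only [Pi.sub_apply, Int.cast_sub]
    linarith
  calc amalgamNorm p q w f
      ≤ ENNReal.ofReal (K * Real.exp d) * (∑' α, profile (α - β) ^ q) ^ (1 / q) :=
        tsum_rpow_rpow_le_mul hq on_cube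
    _ = ENNReal.ofReal (K * Real.exp d) * S := by
        rw [hS]
        congr 2
        exact (Equiv.subRight β).tsum_eq fun α => profile α ^ q
    _ = (S * (Real.exp d).toNNReal : ℝ≥0) * ENNReal.ofReal K := by
        rw [ENNReal.ofReal_mul hK, ENNReal.coe_mul]
        simp only [ENNReal.ofReal]
        ring

end AmalgamNorm

/-! ### The Gaussian -/

/-- The Gaussian `e^{-π|x|²}`, normalized so as to be its own Fourier transform. -/
noncomputable def gaussian {d : ℕ} (x : Fin d → ℝ) : ℂ :=
  (Real.exp (-Real.pi * ∑ i, x i ^ 2) : ℝ)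

section Gaussian

variable {d : ℕ}

lemma norm_gaussian (x : Fin d → ℝ) : ‖gaussian x‖ = Real.exp (-Real.pi * ∑ i, x i ^ 2) := by
  rw [gaussian, Complex.norm_real, Real.norm_of_nonneg (Real.exp_pos _).le]

lemma measurable_gaussian : Measurable (gaussian (d := d)) := by
  unfold gaussian
  fun_prop

lemma fourierT_gaussian (ξ : Fin d → ℝ) : fourierT gaussian ξ = gaussian ξ := by
  have integrand (x : Fin d → ℝ) :
      Complex.exp (-(2 * (Real.pi : ℂ) * Complex.I * ∑ i, (x i : ℂ) * (ξ i : ℂ))) * gaussian x =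
        Complex.exp (-Real.pi * ∑ i, (x i : ℂ) ^ 2 +
          ∑ i, -(2 * Real.pi * Complex.I * ξ i) * x i) := by
    rw [gaussian]
    push_cast
    rw [← Complex.exp_add, add_comm, Finset.mul_sum _ _ (2 * (Real.pi : ℂ) * Complex.I),
      ← Finset.sum_neg_distrib]
    congr 3 with i
    ring
  have exponent : (∑ i, (-(2 * Real.pi * Complex.I * ξ i)) ^ 2) / (4 * (Real.pi : ℂ)) =
      -Real.pi * ∑ i, (ξ i : ℂ) ^ 2 := by
    rw [Finset.sum_div, Finset.mul_sum]
    congr 1 with i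
    field_simp
    linear_combination 4 * (ξ i : ℂ) ^ 2 * Complex.I_sq
  rw [fourierT, integral_congr_ae (ae_of_all _ integrand),
    GaussianFourier.integral_cexp_neg_mul_sum_add (by simpa using Real.pi_pos),
    div_self (by exact_mod_cast Real.pi_ne_zero), Complex.one_cpow, one_mul, exponent, gaussian]
  push_cast
  rfl

lemma fourierT_comp_sub (f : (Fin d → ℝ) → ℂ) (t ξ : Fin d → ℝ) :
    fourierT (fun x => f (x - t)) ξ =
      Complex.exp (-(2 * (Real.pi : ℂ) * Complex.I * ∑ i, (t i : ℂ) * (ξ i : ℂ))) *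
        fourierT f ξ := by
  rw [fourierT, fourierT, ← integral_const_mul, ← integral_add_right_eq_self _ t]
  congr 1 with x
  rw [add_sub_cancel_right, ← mul_assoc, ← Complex.exp_add, ← neg_add, ← mul_add,
    ← Finset.sum_add_distrib]
  simp only [Pi.add_apply, Complex.ofReal_add, add_mul, add_comm]

lemma norm_fourierT_comp_sub (f : (Fin d → ℝ) → ℂ) (t ξ : Fin d → ℝ) :
    ‖fourierT (fun x => f (x - t)) ξ‖ = ‖fourierT f ξ‖ := by
  rw [fourierT_comp_sub, norm_mul, Complex.norm_exp]
  simp [← Complex.ofReal_mul, ← Complex.ofReal_sum]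

lemma measurable_fourierT_gaussian_comp_sub (t : Fin d → ℝ) :
    Measurable (fourierT fun x => gaussian (x - t)) := by
  rw [funext (fourierT_comp_sub gaussian t), funext fourierT_gaussian]
  have := measurable_gaussian (d := d)
  fun_prop

lemma pi_norm_le_sum_abs {ι : Type*} [Fintype ι] (x : ι → ℝ) : ‖x‖ ≤ ∑ i, |x i| :=
  (pi_norm_le_iff_of_nonneg (by positivity)).2 fun i =>
    Finset.single_le_sum (f := fun i => |x i|) (fun _ _ => abs_nonneg _) (Finset.mem_univ i)

lemma exp_mul_norm_mul_norm_gaussian_le (a : ℝ) (x : Fin d → ℝ) :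
    Real.exp (a * ‖x‖) * ‖gaussian x‖ ≤
      Real.exp (d * (|a| + 1) ^ 2) * Real.exp (-∑ i, |x i|) := by
  have coord (s : ℝ) : |a| * |s| - Real.pi * s ^ 2 ≤ (|a| + 1) ^ 2 - |s| := by
    rw [← sq_abs s]
    nlinarith [Real.pi_gt_three, sq_nonneg (|a| + 1 - 2 * |s|), sq_nonneg |s|, sq_nonneg (|a| + 1)]
  rw [norm_gaussian, ← Real.exp_add, ← Real.exp_add, Real.exp_le_exp]
  calc a * ‖x‖ + -Real.pi * ∑ i, x i ^ 2
      ≤ |a| * ∑ i, |x i| + -Real.pi * ∑ i, x i ^ 2 := by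
        gcongr
        · exact le_abs_self a
        · exact pi_norm_le_sum_abs x
    _ = ∑ i, (|a| * |x i| - Real.pi * x i ^ 2) := by
        rw [Finset.sum_sub_distrib, ← Finset.mul_sum, ← Finset.mul_sum, neg_mul, sub_eq_add_neg]
    _ ≤ ∑ i, ((|a| + 1) ^ 2 - |x i|) := Finset.sum_le_sum fun i _ => coord (x i)
    _ = d * (|a| + 1) ^ 2 + -∑ i, |x i| := by
        rw [Finset.sum_sub_distrib, Finset.sum_const, Finset.card_univ, Fintype.card_fin,
          nsmul_eq_mul, sub_eq_add_neg]

variable {w : (Fin d → ℝ) → ℝ} {p q : ℝ}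

lemma IsModerateWeight.exists_amalgamNorm_gaussian_comp_sub_le (hw : IsModerateWeight w) (p : ℝ)
    (hq : 0 < q) :
    ∃ K : ℝ≥0, ∀ t, amalgamNorm p q w (fun x => gaussian (x - t)) ≤ K * ENNReal.ofReal (w t) := by
  obtain ⟨M, a, hM, hwM⟩ := hw.exists_add_le
  obtain ⟨N, hN⟩ := exists_amalgamNorm_le_of_exp_decay d hq
  set b := M * Real.exp (d * (|a| + 1) ^ 2) with hb
  refine ⟨N * b.toNNReal, fun t => ?_⟩
  have hwt := hw.pos t
  have decay (x : Fin d → ℝ) :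
      ‖w x • gaussian (x - t)‖ ≤ b * w t * Real.exp (-∑ i, |x i - t i|) := by
    have hx := hwM t (x - t)
    rw [add_sub_cancel] at hx
    calc ‖w x • gaussian (x - t)‖ = w x * ‖gaussian (x - t)‖ := by
          rw [norm_smul, Real.norm_of_nonneg (hw.pos x).le]
      _ ≤ w t * (M * Real.exp (a * ‖x - t‖)) * ‖gaussian (x - t)‖ := by gcongr
      _ = w t * M * (Real.exp (a * ‖x - t‖) * ‖gaussian (x - t)‖) := by ring
      _ ≤ w t * M * (Real.exp (d * (|a| + 1) ^ 2) * Real.exp (-∑ i, |(x - t) i|)) := by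
          exact mul_le_mul_of_nonneg_left (exp_mul_norm_mul_norm_gaussian_le a (x - t))
            (by positivity)
      _ = b * w t * Real.exp (-∑ i, |x i - t i|) := by simp only [hb, Pi.sub_apply]; ring
  calc amalgamNorm p q w (fun x => gaussian (x - t)) ≤ N * ENNReal.ofReal (b * w t) :=
        hN p w _ _ t (by positivity) decay
    _ = (N * b.toNNReal : ℝ≥0) * ENNReal.ofReal (w t) := by
        rw [ENNReal.ofReal_mul (by positivity), ENNReal.coe_mul, mul_assoc]
        rfl

lemma HasExpGrowth.exists_amalgamNorm_fourierT_gaussian_comp_sub_le (hw : HasExpGrowth w) (p : ℝ)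
    (hq : 0 < q) :
    ∃ K : ℝ≥0, ∀ t : Fin d → ℝ, amalgamNorm p q w (fourierT fun x => gaussian (x - t)) ≤ K := by
  obtain ⟨M, a, hM, hwM⟩ := hw.exists_le_exp
  obtain ⟨N, hN⟩ := exists_amalgamNorm_le_of_exp_decay d hq
  set b := M * Real.exp (d * (|a| + 1) ^ 2)
  refine ⟨N * b.toNNReal, fun t => ?_⟩
  rw [ENNReal.coe_mul]
  refine hN p w _ b 0 (by positivity) fun ξ => ?_
  calc ‖w ξ • fourierT (fun x => gaussian (x - t)) ξ‖ = w ξ * ‖gaussian ξ‖ := by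
        rw [norm_smul, Real.norm_of_nonneg (hw.pos ξ).le, norm_fourierT_comp_sub, fourierT_gaussian]
    _ ≤ M * Real.exp (a * ‖ξ‖) * ‖gaussian ξ‖ := by gcongr; exact hwM ξ
    _ ≤ M * (Real.exp (d * (|a| + 1) ^ 2) * Real.exp (-∑ i, |ξ i|)) := by
        rw [mul_assoc]
        exact mul_le_mul_of_nonneg_left (exp_mul_norm_mul_norm_gaussian_le a ξ) hM.le
    _ = b * Real.exp (-∑ i, |ξ i - (0 : Fin d → ℝ) i|) := by
        simp only [Pi.zero_apply, sub_zero, b, mul_assoc]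

lemma exp_neg_pi_mul_le_norm_gaussian {x : Fin d → ℝ} (hx : ‖x‖ ≤ 1) :
    Real.exp (-Real.pi * d) ≤ ‖gaussian x‖ := by
  have : ∑ i, x i ^ 2 ≤ d :=
    calc ∑ i, x i ^ 2 ≤ ∑ _i : Fin d, (1 : ℝ) := Finset.sum_le_sum fun i _ =>
          (sq_le_one_iff_abs_le_one _).2 ((norm_le_pi_norm x i).trans hx)
      _ = d := by simp
  rw [norm_gaussian, Real.exp_le_exp]
  exact mul_le_mul_of_nonpos_left this (neg_nonpos.2 Real.pi_pos.le)

lemma IsModerateWeight.exists_le_mul_amalgamNorm_gaussian_comp_sub (hw : IsModerateWeight w)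
    (hp : 0 < p) (hq : 0 < q) :
    ∃ c : ℝ≥0, ∀ t,
      ENNReal.ofReal (w t) ≤ c * amalgamNorm p q w (fun x => gaussian (x - t)) := by
  obtain ⟨B, hB⟩ := hw.exists_le_mul_of_norm_sub_le_one
  set c : ℝ≥0 := B * (Real.exp (Real.pi * d)).toNNReal
  have hc : (c : ℝ) = B * Real.exp (Real.pi * d) := by simp [c, (Real.exp_pos _).le]
  refine ⟨c, fun t => ?_⟩
  have on_cube : ∀ x ∈ cube fun i => ⌊t i⌋, w t ≤ ‖(c : ℝ) • w x • gaussian (x - t)‖ := by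
    intro x hx
    have hwx := (hw.pos x).le
    have norm_sub_le : ‖x - t‖ ≤ 1 := norm_sub_le_one_of_mem_cube hx (mem_cube_floor t)
    calc w t ≤ B * w x := hB t x (norm_sub_rev x t ▸ norm_sub_le)
      _ = B * Real.exp (Real.pi * d) * (w x * Real.exp (-Real.pi * d)) := by
          rw [neg_mul, Real.exp_neg]
          field_simp
      _ ≤ c * (w x * ‖gaussian (x - t)‖) := by
          rw [hc]
          gcongr
          exact exp_neg_pi_mul_le_norm_gaussian norm_sub_le
      _ = ‖(c : ℝ) • w x • gaussian (x - t)‖ := by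
          rw [norm_smul, norm_smul, Real.norm_of_nonneg hwx, Real.norm_of_nonneg c.coe_nonneg]
  have hp₀ : ENNReal.ofReal p ≠ 0 := by simpa using hp
  calc ENNReal.ofReal (w t)
      ≤ eLpNorm ((c : ℝ) • fun x => w x • gaussian (x - t)) (ENNReal.ofReal p)
          (volume.restrict (cube fun i => ⌊t i⌋)) := le_eLpNorm_restrict_cube hp₀ on_cube
    _ = c * eLpNorm (fun x => w x • gaussian (x - t)) (ENNReal.ofReal p)
          (volume.restrict (cube fun i => ⌊t i⌋)) := by
        rw [eLpNorm_const_smul, Real.enorm_of_nonneg c.coe_nonneg, ENNReal.ofReal_coe_nnreal]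
    _ ≤ c * amalgamNorm p q w (fun x => gaussian (x - t)) := by
        gcongr
        exact eLpNorm_restrict_cube_le_amalgamNorm p hq w _ _

end Gaussian

/-! ### The embedding -/

section Embedding

variable {d : ℕ} {p q r : ℝ} {ϑ ϑ₁ ϑ₂ : (Fin d → ℝ) → ℝ}

lemma memA_of_weight_le {C : ℝ} (hC : ∀ x, |ϑ₂ x| ≤ C * |ϑ₁ x|) {f : (Fin d → ℝ) → ℂ}
    (hf : MemA p q r ϑ₁ ϑ f) : MemA p q r ϑ₂ ϑ f :=
  ⟨⟨hf.1.1, (amalgamNorm_le_mul_of_weight_le p one_pos hC f).trans_lt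
    (ENNReal.mul_lt_top ENNReal.ofReal_lt_top hf.1.2)⟩, hf.2⟩

lemma ANorm_le_mul_of_weight_le {C : ℝ} (hC₁ : 1 ≤ C) (hC : ∀ x, |ϑ₂ x| ≤ C * |ϑ₁ x|)
    (f : (Fin d → ℝ) → ℂ) : ANorm p q r ϑ₂ ϑ f ≤ ENNReal.ofReal C * ANorm p q r ϑ₁ ϑ f := by
  rw [ANorm, ANorm, mul_add]
  exact add_le_add (amalgamNorm_le_mul_of_weight_le p one_pos hC f)
    (le_mul_of_one_le_left' (ENNReal.one_le_ofReal.2 hC₁))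

lemma memA_gaussian_comp_sub (hr : 0 < r) (hϑ : HasExpGrowth ϑ) (h₁ : IsModerateWeight ϑ₁)
    (t : Fin d → ℝ) : MemA p q r ϑ₁ ϑ fun x => gaussian (x - t) := by
  obtain ⟨K, hK⟩ := h₁.exists_amalgamNorm_gaussian_comp_sub_le p one_pos
  obtain ⟨L, hL⟩ := hϑ.exists_amalgamNorm_fourierT_gaussian_comp_sub_le q hr
  exact ⟨⟨measurable_gaussian.comp (measurable_sub_const t),
      (hK t).trans_lt (ENNReal.mul_lt_top ENNReal.coe_lt_top ENNReal.ofReal_lt_top)⟩,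
    measurable_fourierT_gaussian_comp_sub t, (hL t).trans_lt ENNReal.coe_lt_top⟩

lemma exists_ANorm_gaussian_comp_sub_le (p q : ℝ) (hr : 0 < r) (hϑ : HasExpGrowth ϑ)
    (h₁ : IsModerateWeight ϑ₁) {m : ℝ} (hm : 0 < m) (hmϑ₁ : ∀ x, m ≤ ϑ₁ x) :
    ∃ K : ℝ≥0, ∀ t,
      ANorm p q r ϑ₁ ϑ (fun x => gaussian (x - t)) ≤ K * ENNReal.ofReal (ϑ₁ t) := by
  obtain ⟨K, hK⟩ := h₁.exists_amalgamNorm_gaussian_comp_sub_le p one_pos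
  obtain ⟨L, hL⟩ := hϑ.exists_amalgamNorm_fourierT_gaussian_comp_sub_le q hr
  refine ⟨K + L * m⁻¹.toNNReal, fun t => ?_⟩
  have one_le : 1 ≤ ENNReal.ofReal m⁻¹ * ENNReal.ofReal (ϑ₁ t) := by
    rw [← ENNReal.ofReal_mul (by positivity), ENNReal.one_le_ofReal, one_le_inv_mul₀ hm]
    exact hmϑ₁ t
  calc ANorm p q r ϑ₁ ϑ (fun x => gaussian (x - t))
      ≤ K * ENNReal.ofReal (ϑ₁ t) + L := add_le_add (hK t) (hL t)
    _ ≤ K * ENNReal.ofReal (ϑ₁ t) + L * (ENNReal.ofReal m⁻¹ * ENNReal.ofReal (ϑ₁ t)) := by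
        gcongr
        exact le_mul_of_one_le_right' one_le
    _ = (K + L * m⁻¹.toNNReal : ℝ≥0) * ENNReal.ofReal (ϑ₁ t) := by
        rw [ENNReal.coe_add, ENNReal.coe_mul, add_mul, mul_assoc]
        rfl

end Embedding

theorem A_embedding_iff_general {d : ℕ} (p q r : ℝ) (hp : 1 ≤ p) (hq : 0 < q) (hr : 0 < r)
    {ϑ ϑ₁ ϑ₂ : (Fin d → ℝ) → ℝ} (hϑ : HasExpGrowth ϑ) (h₁ : IsModerateWeight ϑ₁)
    (h₂ : IsModerateWeight ϑ₂) {m : ℝ} (hm : 0 < m) (hmϑ₁ : ∀ x, m ≤ ϑ₁ x) :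
    ((∀ f : (Fin d → ℝ) → ℂ, MemA p q r ϑ₁ ϑ f → MemA p q r ϑ₂ ϑ f) ∧
      ∃ C : ℝ, 0 < C ∧ ∀ f : (Fin d → ℝ) → ℂ, MemA p q r ϑ₁ ϑ f →
        ANorm p q r ϑ₂ ϑ f ≤ ENNReal.ofReal C * ANorm p q r ϑ₁ ϑ f) ↔
    Prec ϑ₂ ϑ₁ := by
  constructor
  · rintro ⟨-, C, -, hC⟩
    obtain ⟨c, hc⟩ := h₂.exists_le_mul_amalgamNorm_gaussian_comp_sub (one_pos.trans_le hp) one_pos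
    obtain ⟨K, hK⟩ := exists_ANorm_gaussian_comp_sub_le p q hr hϑ h₁ hm hmϑ₁
    refine prec_of_ofReal_le (D := c * (C.toNNReal * K)) (fun t => (h₁.pos t).le) fun t => ?_
    calc ENNReal.ofReal (ϑ₂ t) ≤ c * amalgamNorm p 1 ϑ₂ (fun x => gaussian (x - t)) := hc t
      _ ≤ c * ANorm p q r ϑ₂ ϑ (fun x => gaussian (x - t)) := by gcongr; exact le_self_add
      _ ≤ c * (ENNReal.ofReal C * ANorm p q r ϑ₁ ϑ (fun x => gaussian (x - t))) := by
          gcongr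
          exact hC _ (memA_gaussian_comp_sub hr hϑ h₁ t)
      _ ≤ c * (ENNReal.ofReal C * (K * ENNReal.ofReal (ϑ₁ t))) := by gcongr; exact hK t
      _ = (c * (C.toNNReal * K) : ℝ≥0) * ENNReal.ofReal (ϑ₁ t) := by
          simp only [ENNReal.coe_mul, mul_assoc, ENNReal.ofReal]
  · rintro ⟨C, hC, hle⟩
    have weight_le (x : Fin d → ℝ) : |ϑ₂ x| ≤ max C 1 * |ϑ₁ x| := by
      rw [abs_of_pos (h₁.pos x), abs_of_pos (h₂.pos x)]
      exact (hle x).trans (mul_le_mul_of_nonneg_right (le_max_left C 1) (h₁.pos x).le)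
    exact ⟨fun f => memA_of_weight_le weight_le, max C 1, lt_max_of_lt_left hC,
      fun f _ => ANorm_le_mul_of_weight_le (le_max_right C 1) weight_le f⟩

/-- `A^{p,1,q,r}_{ϑ₁,ϑ}(ℝ^d)` embeds continuously into
`A^{p,1,q,r}_{ϑ₂,ϑ}(ℝ^d)` if and only if `ϑ₂ ≺ ϑ₁`. -/
theorem A_embedding_iff {d : ℕ} (p q r : ℝ) (hp : 1 ≤ p) (hq : 1 ≤ q) (hr : 1 ≤ r)
    (ϑ ϑ₁ ϑ₂ : (Fin d → ℝ) → ℝ)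
    (hϑ : IsBeurling ϑ) (h1 : IsBeurling ϑ₁) (h2 : IsBeurling ϑ₂) :
    ((∀ f : (Fin d → ℝ) → ℂ, MemA p q r ϑ₁ ϑ f → MemA p q r ϑ₂ ϑ f) ∧
      ∃ C : ℝ, 0 < C ∧ ∀ f : (Fin d → ℝ) → ℂ, MemA p q r ϑ₁ ϑ f →
        ANorm p q r ϑ₂ ϑ f ≤ ENNReal.ofReal C * ANorm p q r ϑ₁ ϑ f) ↔
    Prec ϑ₂ ϑ₁ := by
  exact A_embedding_iff_general p q r hp (one_pos.trans_le hq) (one_pos.trans_le hr) hϑ.hasExpGrowth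
    h1.isModerateWeight h2.isModerateWeight one_pos h1.2.1
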